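/- For every planar graph G and every ball hypergraph 𝓗 of G, the fractional matching number satisfies ν*(𝓗) ≤ 6e·ν(𝓗), where e is the base of the natural logarithm. -/

import Mathlib

/-- The ball of radius `r` centered at `v` in the graph metric of `G`:
all vertices `u` with `d_G(v,u) ≤ r` (in particular, `u` must be reachable from `v`). -/
def SimpleGraph.gBall {V : Type*} (G : SimpleGraph V) (v : V) (r : ℕ) : Set V :=
  {u | G.Reachable v u ∧ G.dist v u ≤ r}

/-- A ball hypergraph of `G` is given by its edge set `E`: a collection of subsets of
`V(G)`, each of which is a ball of `G`. -/
def IsBallHypergraph {V : Type*} (G : SimpleGraph V) (E : Set (Set V)) : Prop :=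
  ∀ e ∈ E, ∃ v r, e = G.gBall v r

/-- `H` is a minor of `G`: there are pairwise disjoint connected nonempty branch sets
in `G`, one for each vertex of `H`, with an edge of `G` between the branch sets of any
two adjacent vertices of `H`. -/
def GraphMinor {W : Type*} {V : Type*} (H : SimpleGraph W) (G : SimpleGraph V) : Prop :=
  ∃ f : W → Set V,
    (∀ w, (G.induce (f w)).Connected) ∧
    (Pairwise fun w₁ w₂ => Disjoint (f w₁) (f w₂)) ∧
    (∀ w₁ w₂, H.Adj w₁ w₂ → ∃ u ∈ f w₁, ∃ v ∈ f w₂, G.Adj u v)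

/-- The matching number of the hypergraph with edge set `E`: the maximum number of
pairwise disjoint edges. -/
noncomputable def matchingNumber {V : Type*} [Fintype V] (E : Set (Set V)) : ℕ :=
  sSup {n | ∃ M : Finset (Set V), ↑M ⊆ E ∧ (M : Set (Set V)).Pairwise Disjoint ∧ M.card = n}

/-- The transversal number of the hypergraph with edge set `E`: the minimum size of a
set of vertices meeting every edge. -/
noncomputable def transversalNumber {V : Type*} [Fintype V] (E : Set (Set V)) : ℕ :=
  sInf {n | ∃ T : Finset V, (∀ e ∈ E, ∃ v ∈ T, v ∈ e) ∧ T.card = n}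


/-- A graph is planar iff it can be embedded in the plane without edge crossings;
by Wagner's theorem this holds if and only if it has neither a `K₅` minor nor a
`K₃,₃` minor, which we take as the (combinatorial) definition of planarity. -/
def IsPlanar {V : Type*} (G : SimpleGraph V) : Prop :=
  ¬ GraphMinor (⊤ : SimpleGraph (Fin 5)) G ∧
    ¬ GraphMinor (completeBipartiteGraph (Fin 3) (Fin 3)) G

/-- `w` is a fractional matching of the hypergraph with edge set `E`: nonnegative
weights on the edges (zero outside `E`) such that for every vertex, the total weight
of the edges containing it is at most `1`. -/
def IsFractionalMatching {V : Type*} [Fintype V] (E : Set (Set V)) (w : Set V → ℝ) :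
    Prop :=
  (∀ e, 0 ≤ w e) ∧ (∀ e, e ∉ E → w e = 0) ∧
    ∀ v : V, ∑ e : Set V, Set.indicator {e : Set V | v ∈ e} w e ≤ 1

/-!
A fractional matching may be assumed to be supported on inclusion-minimal balls. Draw each ball `e`
independently with probability `1 - exp (-w e)`. A vertex `v` common to two balls `e` and `f`
carries total weight at most `1`, so `v` lies in both `e` and `f` and in no other drawn ball with
probability at least `w e * w f / exp 1`. On the other hand, the pairs of drawn balls having such an
exclusive common vertex form a minor of `G`, the branch sets being the Voronoi cells for the
distance to the centre minus the radius, with the radii perturbed to break ties; as this minor has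
no `K₅` minor, Mader's theorem bounds its number of edges by three times the number of drawn balls.
Comparing expectations bounds the sum of `w e * w f` over the intersecting pairs by a multiple of
the total weight, and a weighted form of Turán's theorem then yields a large matching.
-/

open scoped Finset

section ConnectedInduce

variable {V W : Type*} {G : SimpleGraph V} {H : SimpleGraph W}

theorem connected_induce_singleton (G : SimpleGraph V) (v : V) : (G.induce {v}).Connected := by
  rw [SimpleGraph.induce_singleton_eq_top]
  exact SimpleGraph.connected_top

theorem connected_induce_image (φ : H →g G) {s : Set W} (hs : (H.induce s).Connected) :
    (G.induce (φ '' s)).Connected :=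
  hs.map (SimpleGraph.induceHom φ (Set.mapsTo_image φ s)) fun ⟨_, w, hw, h⟩ =>
    ⟨⟨w, hw⟩, Subtype.ext h⟩

theorem connected_induce_biUnion {s : Set W} {f : W → Set V} (hs : (H.induce s).Connected)
    (hf : ∀ w ∈ s, (G.induce (f w)).Connected)
    (hadj : ∀ w₁ ∈ s, ∀ w₂ ∈ s, H.Adj w₁ w₂ → ∃ u ∈ f w₁, ∃ v ∈ f w₂, G.Adj u v) :
    (G.induce (⋃ w ∈ s, f w)).Connected := by
  obtain ⟨w₀, hw₀⟩ := hs.nonempty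
  obtain ⟨x₀, hx₀⟩ := (hf w₀ hw₀).nonempty
  have within : ∀ w ∈ s, ∀ x ∈ f w, ∀ y ∈ f w, ∀ hx hy,
      (G.induce (⋃ w ∈ s, f w)).Reachable ⟨x, hx⟩ ⟨y, hy⟩ := fun w hw x hx y hy _ _ =>
    ((hf w hw).preconnected ⟨x, hx⟩ ⟨y, hy⟩).map
      (G.induceHomOfLE (Set.subset_biUnion_of_mem (u := f) hw)).toHom
  have along : ∀ {a b : s} (_ : (H.induce s).Walk a b), ∀ x ∈ f a, ∀ y ∈ f b, ∀ hx hy,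
      (G.induce (⋃ w ∈ s, f w)).Reachable ⟨x, hx⟩ ⟨y, hy⟩ := by
    intro a b p
    induction p with
    | @nil a => exact within a a.2
    | @cons a b _ hab _ ih =>
      intro x hx y hy hx' hy'
      obtain ⟨u, hu, v, hv, huv⟩ := hadj a a.2 b b.2 hab
      exact (within a a.2 x hx u hu hx' (Set.mem_biUnion a.2 hu)).trans
        ((SimpleGraph.Adj.reachable (SimpleGraph.comap_adj.2 huv)).trans
          (ih v hv y hy (Set.mem_biUnion b.2 hv) hy'))
  refine SimpleGraph.connected_iff_exists_forall_reachable _ |>.2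
    ⟨⟨x₀, Set.mem_biUnion hw₀ hx₀⟩, fun ⟨y, hy⟩ => ?_⟩
  obtain ⟨w, hw, hyw⟩ := Set.mem_iUnion₂.1 hy
  obtain ⟨p⟩ := hs.preconnected ⟨w₀, hw₀⟩ ⟨w, hw⟩
  exact along p x₀ hx₀ y hyw _ _

end ConnectedInduce

namespace GraphMinor

variable {U V W : Type*} {G : SimpleGraph V} {H : SimpleGraph W} {K : SimpleGraph U}

theorem of_copy (f : SimpleGraph.Copy H G) : GraphMinor H G :=
  ⟨fun w => {f w}, fun _ => connected_induce_singleton G _,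
    fun _ _ hne => Set.disjoint_singleton.2 (f.injective.ne hne),
    fun _ _ h => ⟨_, rfl, _, rfl, f.toHom.map_adj h⟩⟩

theorem trans (hKH : GraphMinor K H) (hHG : GraphMinor H G) : GraphMinor K G := by
  obtain ⟨g, g_conn, g_disj, g_adj⟩ := hKH
  obtain ⟨f, f_conn, f_disj, f_adj⟩ := hHG
  refine ⟨fun u => ⋃ w ∈ g u, f w, fun u => ?_, fun u₁ u₂ hu => ?_, fun u₁ u₂ hu => ?_⟩
  · exact connected_induce_biUnion (g_conn u) (fun w _ => f_conn w)
      fun w₁ _ w₂ _ => f_adj w₁ w₂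
  · simp only [Set.disjoint_iUnion_left, Set.disjoint_iUnion_right]
    exact fun w₁ hw₁ w₂ hw₂ => f_disj ((g_disj hu).ne_of_mem hw₂ hw₁)
  · obtain ⟨w₁, hw₁, w₂, hw₂, hw⟩ := g_adj u₁ u₂ hu
    obtain ⟨x, hx, y, hy, hxy⟩ := f_adj w₁ w₂ hw
    exact ⟨x, Set.mem_biUnion hw₁ hx, y, Set.mem_biUnion hw₂ hy, hxy⟩

theorem map_of_connected_fibers (f : V → W)
    (hf : ∀ w, (G.induce (f ⁻¹' {w})).Connected) : GraphMinor (G.map f) G := by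
  refine ⟨fun w => f ⁻¹' {w}, hf,
    fun _ _ h => (Set.disjoint_singleton.2 h).preimage f, fun w₁ w₂ h => ?_⟩
  obtain ⟨-, u, v, huv, hu, hv⟩ := (SimpleGraph.map_adj' f G w₁ w₂).1 h
  exact ⟨u, hu, v, hv, huv⟩

theorem top_of_forall_lt {ι : Type*} [LinearOrder ι] (f : ι → Set V)
    (f_conn : ∀ i, (G.induce (f i)).Connected) (f_disj : ∀ i j, i < j → Disjoint (f i) (f j))
    (f_adj : ∀ i j, i < j → ∃ u ∈ f i, ∃ v ∈ f j, G.Adj u v) :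
    GraphMinor (⊤ : SimpleGraph ι) G := by
  refine ⟨f, f_conn, fun i j hij => ?_, fun i j hij => ?_⟩
  · exact hij.lt_or_gt.elim (f_disj i j) fun hji => (f_disj j i hji).symm
  · obtain hij | hji := hij.ne.lt_or_gt
    · exact f_adj i j hij
    · obtain ⟨u, hu, v, hv, huv⟩ := f_adj j i hji
      exact ⟨v, hv, u, hu, huv.symm⟩

theorem top_succ_of_forall_adj {n : ℕ} {s : Set V} {v : V} (hv : ∀ u ∈ s, G.Adj v u)
    (h : GraphMinor (⊤ : SimpleGraph (Fin n)) (G.induce s)) :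
    GraphMinor (⊤ : SimpleGraph (Fin (n + 1))) G := by
  obtain ⟨f, f_conn, f_disj, f_adj⟩ := h
  refine top_of_forall_lt (Fin.cons {v} fun i => Subtype.val '' f i) ?_ ?_ ?_
  · refine Fin.cases (connected_induce_singleton G v) fun i => ?_
    exact connected_induce_image (SimpleGraph.Embedding.induce s).toHom (f_conn i)
  · refine fun i j => Fin.cases (fun h => absurd h (Fin.not_lt_zero i)) (fun j => ?_) j
    refine Fin.cases (fun _ => Set.disjoint_singleton_left.2 ?_) (fun i hij => ?_) i
    · rintro ⟨u, -, rfl⟩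
      exact G.irrefl (hv u u.2)
    · exact (Set.disjoint_image_iff Subtype.val_injective).2
        (f_disj (Fin.succ_lt_succ_iff.1 hij).ne)
  · refine fun i j => Fin.cases (fun h => absurd h (Fin.not_lt_zero i)) (fun j => ?_) j
    refine Fin.cases (fun _ => ?_) (fun i hij => ?_) i
    · obtain ⟨u, hu⟩ := (f_conn j).nonempty
      exact ⟨v, rfl, u, ⟨u, hu, rfl⟩, hv u u.2⟩
    · obtain ⟨x, hx, y, hy, hxy⟩ := f_adj i j (Fin.succ_lt_succ_iff.1 hij).ne
      exact ⟨x, ⟨x, hx, rfl⟩, y, ⟨y, hy, rfl⟩, hxy⟩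

end GraphMinor

section EdgeContraction

variable {V : Type*} {a b : V}

open Classical in
/-- The map identifying `b` with `a`; mapping a graph along it contracts the edge `ab`. -/
noncomputable def mergeMap (hab : a ≠ b) (x : V) : ({b}ᶜ : Set V) :=
  if hx : x = b then ⟨a, hab⟩ else ⟨x, hx⟩

theorem mergeMap_eq_mergeMap_iff (hab : a ≠ b) {x y : V} :
    mergeMap hab x = mergeMap hab y ↔ x = y ∨ x = a ∧ y = b ∨ x = b ∧ y = a := by
  unfold mergeMap
  split_ifs <;> grind

theorem GraphMinor.map_mergeMap {G : SimpleGraph V} (hab : G.Adj a b) :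
    GraphMinor (G.map (mergeMap hab.ne)) G := by
  refine map_of_connected_fibers _ fun ⟨x, hx⟩ => ?_
  have mergeMap_self : mergeMap hab.ne x = ⟨x, hx⟩ := dif_neg hx
  obtain rfl | hxa := eq_or_ne x a
  · have : mergeMap hab.ne ⁻¹' {⟨x, hx⟩} = {x, b} := by
      ext y
      rw [Set.mem_preimage, Set.mem_singleton_iff, ← mergeMap_self, mergeMap_eq_mergeMap_iff]
      grind
    rw [this]
    exact SimpleGraph.induce_pair_connected_of_adj hab
  · have : mergeMap hab.ne ⁻¹' {⟨x, hx⟩} = {x} := by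
      ext y
      rw [Set.mem_preimage, Set.mem_singleton_iff, ← mergeMap_self, mergeMap_eq_mergeMap_iff]
      grind
    rw [this]
    exact connected_induce_singleton G x

open Classical in
theorem card_edgeFinset_le_card_edgeFinset_map_mergeMap [Fintype V] {G : SimpleGraph V}
    (hab : G.Adj a b) :
    #G.edgeFinset ≤ #(G.map (mergeMap hab.ne)).edgeFinset + 1 +
      #(G.neighborFinset a ∩ G.neighborFinset b) := by
  -- Contracting `ab` loses that edge and, for each common neighbour, one of two parallel edges.
  set lost := insert s(a, b) ((G.neighborFinset a ∩ G.neighborFinset b).image (s(b, ·)))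
  have card_lost : #lost ≤ #(G.neighborFinset a ∩ G.neighborFinset b) + 1 :=
    (Finset.card_insert_le _ _).trans (Nat.succ_le_succ Finset.card_image_le)
  have hmaps : ∀ e ∈ G.edgeFinset \ lost,
      e.map (mergeMap hab.ne) ∈ (G.map (mergeMap hab.ne)).edgeFinset := by
    refine Sym2.ind fun x y he => ?_
    simp only [lost, Finset.mem_sdiff, SimpleGraph.mem_edgeFinset, SimpleGraph.mem_edgeSet,
      Finset.mem_insert, Sym2.eq_iff] at he
    rw [Sym2.map_mk, SimpleGraph.mem_edgeFinset, SimpleGraph.mem_edgeSet]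
    refine SimpleGraph.map_adj_apply' he.1 fun h => ?_
    have := he.1.ne
    grind [mergeMap_eq_mergeMap_iff]
  have hinj : Set.InjOn (Sym2.map (mergeMap hab.ne)) (G.edgeFinset \ lost : Finset (Sym2 V)) := by
    refine fun e => Sym2.ind (fun x y he => ?_) e
    refine fun e' => Sym2.ind (fun x' y' he' => ?_) e'
    simp only [lost, Finset.coe_sdiff, Set.mem_sdiff, Finset.mem_coe, SimpleGraph.mem_edgeFinset,
      SimpleGraph.mem_edgeSet, Finset.mem_insert, Finset.mem_image, Finset.mem_inter,
      SimpleGraph.mem_neighborFinset, Sym2.eq_iff, not_or, not_exists, not_and] at he he'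
    simp only [Sym2.map_mk, Sym2.eq_iff, mergeMap_eq_mergeMap_iff]
    grind [G.adj_comm]
  have := Finset.card_le_card_of_injOn _ hmaps hinj
  have := Finset.le_card_sdiff lost G.edgeFinset
  omega

end EdgeContraction

section SmallCliqueMinors

variable {V : Type*} {G : SimpleGraph V}

theorem GraphMinor.top_three_of_two_le_degree [Finite V] [Nonempty V] [G.LocallyFinite]
    (hG : ∀ v, 2 ≤ G.degree v) : GraphMinor (⊤ : SimpleGraph (Fin 3)) G := by
  obtain ⟨u, v, p, hp, p_longest⟩ :=
    SimpleGraph.Walk.exists_isPath_forall_isPath_length_le_length G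
  have adj_mem_support : ∀ x, G.Adj x u → x ∈ p.support := fun x hx => by
    by_contra hxp
    have := p_longest _ _ _ (hp.cons hxp (h := hx))
    rw [SimpleGraph.Walk.length_cons] at this
    omega
  obtain ⟨w, hw, hwp⟩ := Finset.exists_mem_ne (hG u) p.snd
  rw [SimpleGraph.mem_neighborFinset] at hw
  have hwp' := adj_mem_support w hw.symm
  cases p with
  | nil => exact absurd (List.mem_singleton.1 hwp') hw.ne'
  | @cons _ a _ hua q => cases q with
    | nil =>
      simp only [SimpleGraph.Walk.support_cons, SimpleGraph.Walk.support_nil, List.mem_cons,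
        List.not_mem_nil, or_false] at hwp'
      exact absurd hwp' (not_or.2 ⟨hw.ne', hwp⟩)
    | @cons _ b _ hab q =>
      have hwq : w ∈ q.support := by
        rw [SimpleGraph.Walk.snd_cons] at hwp
        simpa [hw.ne', hwp] using hwp'
      simp only [SimpleGraph.Walk.cons_isPath_iff, SimpleGraph.Walk.support_cons,
        List.mem_cons, not_or] at hp
      refine .top_of_forall_lt ![{u}, {a}, {x | x ∈ q.support}] ?_ ?_ ?_
      · simp [Fin.forall_fin_succ, q.connected_induce_support]
      · simp [Fin.forall_fin_succ, hp, hua.ne']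
      · have exists_adj_a : ∃ x ∈ q.support, G.Adj a x := ⟨b, q.start_mem_support, hab⟩
        have exists_adj_u : ∃ x ∈ q.support, G.Adj u x := ⟨w, hwq, hw⟩
        simp [Fin.forall_fin_succ, hua, exists_adj_a, exists_adj_u]

theorem degree_induce_eq_card_neighborFinset_inter [DecidableEq V] (s : Finset V) (v : s)
    [Fintype ((G.induce (s : Set V)).neighborSet v)] [Fintype (G.neighborSet v)] :
    (G.induce (s : Set V)).degree v = #(G.neighborFinset v ∩ s) := by
  rw [← SimpleGraph.card_neighborFinset_eq_degree, ← Finset.card_map (Function.Embedding.subtype _)]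
  congr 1
  ext x
  simp [and_comm]

open Classical in
theorem exists_isUniversal_of_three_le_degree [Fintype V] [Nonempty V]
    (hcard : Fintype.card V ≤ 5) (hG : ∀ v, 3 ≤ G.degree v) : ∃ v, G.IsUniversal v := by
  by_contra! h
  have compl_pos : ∀ v, 0 < Gᶜ.degree v := fun v => by
    simp only [SimpleGraph.IsUniversal, not_forall] at h
    obtain ⟨w, hne, hvw⟩ := h v
    exact (SimpleGraph.degree_pos_iff_exists_adj _ _).2 ⟨w, hne, hvw⟩
  obtain ⟨v₀⟩ := ‹Nonempty V›
  have card_eq : Fintype.card V = 5 := by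
    have := compl_pos v₀
    have := hG v₀
    rw [SimpleGraph.degree_compl] at *
    omega
  have compl_one : ∀ v, Gᶜ.degree v = 1 := fun v => by
    have := compl_pos v
    have := hG v
    rw [SimpleGraph.degree_compl] at *
    omega
  have := Gᶜ.even_card_odd_degree_vertices
  simp only [compl_one, odd_one, Finset.filter_true, Finset.card_univ, card_eq] at this
  exact absurd this (by decide)

open Classical in
theorem GraphMinor.top_four_of_three_le_degree [Fintype V] [Nonempty V]
    (hcard : Fintype.card V ≤ 5) (hG : ∀ v, 3 ≤ G.degree v) :
    GraphMinor (⊤ : SimpleGraph (Fin 4)) G := by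
  obtain ⟨v, hv⟩ := exists_isUniversal_of_three_le_degree hcard hG
  refine top_succ_of_forall_adj (s := ((Finset.univ.erase v : Finset V) : Set V)) (v := v)
    (fun u hu => hv (Finset.ne_of_mem_erase hu).symm) ?_
  obtain ⟨u, hu⟩ := (SimpleGraph.degree_pos_iff_exists_adj _ _).1 (Nat.zero_lt_of_lt (hG v))
  have : Nonempty ((Finset.univ.erase v : Finset V) : Set V) := ⟨u, by simpa using hu.ne'⟩
  refine top_three_of_two_le_degree fun x => ?_
  rw [degree_induce_eq_card_neighborFinset_inter, Finset.inter_erase, Finset.inter_univ]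
  have := hG x
  have : G.degree x - 1 ≤ #((G.neighborFinset x).erase v) := Finset.pred_card_le_card_erase
  omega

open Classical in
theorem GraphMinor.top_five_of_degree_le [Fintype V] {v : V} (hpos : 0 < G.degree v)
    (hdeg : G.degree v ≤ 5)
    (hcommon : ∀ x, G.Adj v x → 3 ≤ #(G.neighborFinset x ∩ G.neighborFinset v)) :
    GraphMinor (⊤ : SimpleGraph (Fin 5)) G := by
  refine top_succ_of_forall_adj (s := (G.neighborFinset v : Set V)) (v := v)
    (fun u hu => (G.mem_neighborFinset v u).1 hu) ?_
  have : Nonempty (G.neighborFinset v : Set V) :=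
    (Finset.card_pos.1 (by rwa [SimpleGraph.card_neighborFinset_eq_degree])).to_subtype
  refine top_four_of_three_le_degree ?_ fun x => ?_
  · rwa [← SimpleGraph.card_neighborFinset_eq_degree, ← Fintype.card_coe] at hdeg
  · have := hcommon x ((G.mem_neighborFinset v x).1 x.2)
    rwa [← degree_induce_eq_card_neighborFinset_inter] at this

end SmallCliqueMinors

section EdgeBound

universe u

variable {V : Type u}

open Classical in
theorem exists_le_card_edgeFinset_eq [Fintype V] {G : SimpleGraph V} {m : ℕ}
    (hm : m ≤ #G.edgeFinset) : ∃ H ≤ G, #H.edgeFinset = m := by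
  obtain ⟨S, hSG, hS⟩ := Finset.exists_subset_card_eq hm
  obtain ⟨H, hH⟩ : ∃ H : SimpleGraph V, H.edgeSet = S := by
    refine ⟨SimpleGraph.fromEdgeSet S, ?_⟩
    rw [SimpleGraph.edgeSet_fromEdgeSet, sdiff_eq_left, Set.disjoint_left]
    exact fun e he => G.not_isDiag_of_mem_edgeFinset (hSG he)
  have edgeFinset_eq : H.edgeFinset = S := by
    rw [← Finset.coe_inj, SimpleGraph.coe_edgeFinset, hH]
  refine ⟨H, ?_, edgeFinset_eq ▸ hS⟩
  rwa [← SimpleGraph.edgeFinset_subset_edgeFinset, edgeFinset_eq]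

open Classical in
theorem exists_degree_lt_of_card_edgeFinset_lt [Fintype V] {G : SimpleGraph V} {k : ℕ}
    (h : #G.edgeFinset < k * Fintype.card V) : ∃ v, G.degree v < 2 * k := by
  by_contra! hdeg
  have := Finset.card_nsmul_le_sum Finset.univ (G.degree ·) (2 * k) fun v _ => hdeg v
  rw [G.sum_degrees_eq_twice_card_edges, Finset.card_univ, smul_eq_mul] at this
  nlinarith

open Classical in
/-- Mader's minimal-minor argument: among the minors with at least `k n - 1` edges on `n`
vertices, in one with fewest vertices contracting any edge must destroy more than `k` edges. -/
theorem exists_graphMinor_forall_le_card_common_neighbors [Fintype V] [Nonempty V]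
    {G : SimpleGraph V} {k : ℕ} (hk : 2 ≤ k) (hG : k * Fintype.card V ≤ #G.edgeFinset + 1) :
    ∃ (W : Type u) (_ : Fintype W) (H : SimpleGraph W) (v : W), GraphMinor H G ∧
      0 < H.degree v ∧ H.degree v < 2 * k ∧
      ∀ x, H.Adj v x → k ≤ #(H.neighborFinset x ∩ H.neighborFinset v) := by
  induction hn : Fintype.card V using Nat.strong_induction_on generalizing V with
  | _ n ih =>
  subst hn
  obtain ⟨H, hHG, hH⟩ :=
    exists_le_card_edgeFinset_eq (G := G) (m := k * Fintype.card V - 1) (by omega)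
  have minor_H : GraphMinor H G := .of_copy (.ofLE _ _ hHG)
  have hV : 0 < Fintype.card V := Fintype.card_pos
  have k_le : k ≤ k * Fintype.card V := Nat.le_mul_of_pos_right k hV
  have one_lt_card : 1 < Fintype.card V := by
    by_contra! h
    have := H.card_edgeFinset_le_card_choose_two
    rw [Nat.choose_eq_zero_of_lt (by omega)] at this
    omega
  obtain ⟨v, hv⟩ := exists_degree_lt_of_card_edgeFinset_lt (G := H) (k := k) (by omega)
  by_contra! hcon
  have card_lt : ∀ (J : SimpleGraph ({v}ᶜ : Set V)) [Fintype J.edgeSet], GraphMinor J H →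
      #J.edgeFinset + k < #H.edgeFinset := fun J _ hJ => by
    have card_compl : Fintype.card ({v}ᶜ : Set V) = Fintype.card V - 1 := by
      rw [Fintype.card_compl_set, Set.card_singleton]
    have : Nonempty ({v}ᶜ : Set V) := Fintype.card_pos_iff.1 (by omega)
    by_contra! hle
    have card_ge : k * Fintype.card ({v}ᶜ : Set V) ≤ #J.edgeFinset + 1 := by
      rw [card_compl, Nat.mul_sub_one]
      omega
    obtain ⟨W, _, K, w, hKJ, hpos, hlt, hcommon⟩ :=
      ih _ (by omega) (G := J) (by convert card_ge) rfl
    obtain ⟨x, hx, hlt_k⟩ := hcon W _ K w (hKJ.trans (hJ.trans minor_H)) hpos hlt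
    exact hlt_k.not_ge (hcommon x hx)
  have degree_pos : 0 < H.degree v := by
    by_contra! h
    have := card_lt _ (.of_copy (.induce H _))
    rw [SimpleGraph.card_edgeFinset_induce_compl_singleton,
      SimpleGraph.card_edgeFinset_deleteIncidenceSet] at this
    omega
  obtain ⟨x, hvx, hx⟩ := hcon V _ H v minor_H degree_pos hv
  have := card_edgeFinset_le_card_edgeFinset_map_mergeMap hvx.symm
  have := card_lt _ (.map_mergeMap hvx.symm)
  omega

open Classical in
/-- Mader's bound `3 n - 6`, weakened to `3 n - 2` so that it holds for all `n ≥ 1`. -/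
theorem card_edgeFinset_add_two_le_of_not_graphMinor_top_five [Fintype V] [Nonempty V]
    {G : SimpleGraph V} (hG : ¬ GraphMinor (⊤ : SimpleGraph (Fin 5)) G) :
    #G.edgeFinset + 2 ≤ 3 * Fintype.card V := by
  by_contra! h
  obtain ⟨W, _, H, v, hHG, hpos, hlt, hcommon⟩ :=
    exists_graphMinor_forall_le_card_common_neighbors (k := 3) (by norm_num)
      (Nat.le_of_lt_succ h)
  exact hG ((GraphMinor.top_five_of_degree_le hpos (Nat.le_of_lt_succ hlt) hcommon).trans hHG)

theorem card_edgeFinset_le_of_not_graphMinor_top_five [Fintype V]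
    {G : SimpleGraph V} [Fintype G.edgeSet] (hG : ¬ GraphMinor (⊤ : SimpleGraph (Fin 5)) G) :
    #G.edgeFinset ≤ 3 * Fintype.card V := by
  obtain _ | _ := isEmpty_or_nonempty V
  · simp [Subsingleton.elim G ⊥]
  · have := card_edgeFinset_add_two_le_of_not_graphMinor_top_five hG
    convert Nat.le_of_add_right_le this

end EdgeBound

section Voronoi

variable {V ι : Type*} {G : SimpleGraph V} {c : ι → V} {ρ : ι → ℝ}

theorem exists_adj_dist_eq_add_one {a u : V} (h : G.Reachable a u) (hne : u ≠ a) :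
    ∃ u', G.Adj u u' ∧ G.Reachable a u' ∧ G.dist a u = G.dist a u' + 1 := by
  obtain ⟨p, hp⟩ := h.symm.exists_walk_length_eq_dist
  cases p with
  | nil => exact absurd rfl hne
  | @cons _ u' _ huu' q =>
    refine ⟨u', huu', q.reachable.symm, ?_⟩
    rw [SimpleGraph.Walk.length_cons] at hp
    have := SimpleGraph.dist_le q
    have := huu'.reachable.dist_triangle_left a
    have := SimpleGraph.dist_eq_one_iff_adj.2 huu'
    rw [G.dist_comm (u := a), G.dist_comm (u := a)]
    omega

/-- The additively weighted distance from the centre `c i`, relative to which Voronoi cells are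
formed. -/
noncomputable def weightedDist (G : SimpleGraph V) (c : ι → V) (ρ : ι → ℝ) (i : ι) (u : V) : ℝ :=
  G.dist (c i) u - ρ i

/-- The cell of `i` in the additively weighted Voronoi diagram with centres `c` and weights `ρ`;
unreachable centres do not compete, `SimpleGraph.dist` being zero there. -/
def voronoiCell (G : SimpleGraph V) (c : ι → V) (ρ : ι → ℝ) (i : ι) : Set V :=
  {u | G.Reachable (c i) u ∧
    ∀ j, G.Reachable (c j) u → weightedDist G c ρ i u ≤ weightedDist G c ρ j u}

theorem weightedDist_le_of_adj {u u' : V} (h : G.Adj u u') (i : ι) :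
    weightedDist G c ρ i u ≤ weightedDist G c ρ i u' + 1 := by
  have := h.symm.reachable.dist_triangle_right (c i)
  rw [SimpleGraph.dist_eq_one_iff_adj.2 h.symm] at this
  have : (G.dist (c i) u : ℝ) ≤ G.dist (c i) u' + 1 := by exact_mod_cast this
  unfold weightedDist
  linarith

theorem exists_adj_weightedDist_add_one {i : ι} {u : V} (h : G.Reachable (c i) u)
    (hne : u ≠ c i) : ∃ u', G.Adj u u' ∧ G.Reachable (c i) u' ∧
      G.dist (c i) u = G.dist (c i) u' + 1 ∧
      ∀ j, weightedDist G c ρ i u ≤ weightedDist G c ρ j u →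
        weightedDist G c ρ i u' ≤ weightedDist G c ρ j u' := by
  obtain ⟨u', hadj, hreach, hdist⟩ := exists_adj_dist_eq_add_one h hne
  refine ⟨u', hadj, hreach, hdist, fun j hj => ?_⟩
  have := weightedDist_le_of_adj (c := c) (ρ := ρ) hadj j
  have : weightedDist G c ρ i u = weightedDist G c ρ i u' + 1 := by
    unfold weightedDist
    rw [hdist]
    push_cast
    ring
  linarith

theorem connected_induce_voronoiCell {i : ι} (hi : c i ∈ voronoiCell G c ρ i) :
    (G.induce (voronoiCell G c ρ i)).Connected := by
  refine (SimpleGraph.connected_iff_exists_forall_reachable _).2 ⟨⟨c i, hi⟩, fun ⟨u, hu⟩ => ?_⟩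
  induction hn : G.dist (c i) u generalizing u with
  | zero =>
    obtain rfl := hu.1.dist_eq_zero_iff.1 hn
    exact .refl _
  | succ n ih =>
    have hne : u ≠ c i := by
      rintro rfl
      simp at hn
    obtain ⟨u', hadj, hreach, hdist, hle⟩ := exists_adj_weightedDist_add_one (ρ := ρ) hu.1 hne
    have hu' : u' ∈ voronoiCell G c ρ i :=
      ⟨hreach, fun j hj => hle j (hu.2 j (hj.trans hadj.symm.reachable))⟩
    exact (ih u' hu' (by omega)).trans
      (SimpleGraph.Adj.reachable (SimpleGraph.comap_adj.2 hadj.symm))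

theorem disjoint_voronoiCell (hρ : Function.Injective fun i => Int.fract (ρ i)) {i j : ι}
    (hij : i ≠ j) : Disjoint (voronoiCell G c ρ i) (voronoiCell G c ρ j) := by
  refine Set.disjoint_left.2 fun u hi hj => hij (hρ ?_)
  have h := (hi.2 j hj.1).antisymm (hj.2 i hi.1)
  refine Int.fract_eq_fract.2 ⟨G.dist (c i) u - G.dist (c j) u, ?_⟩
  unfold weightedDist at h
  push_cast
  linarith

theorem exists_adj_voronoiCell (hρ : Function.Injective fun i => Int.fract (ρ i)) {i j : ι}
    (hij : i ≠ j) (hj : c j ∈ voronoiCell G c ρ j) {v : V} (hv : v ∈ voronoiCell G c ρ i)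
    (hreach : G.Reachable (c j) v)
    (hsecond : ∀ l, l ≠ i → G.Reachable (c l) v →
      weightedDist G c ρ j v ≤ weightedDist G c ρ l v) :
    ∃ x ∈ voronoiCell G c ρ i, ∃ y ∈ voronoiCell G c ρ j, G.Adj x y := by
  induction hn : G.dist (c j) v generalizing v with
  | zero =>
    obtain rfl := hreach.dist_eq_zero_iff.1 hn
    exact absurd hj (Set.disjoint_left.1 (disjoint_voronoiCell hρ hij) hv)
  | succ n ih =>
    have hne : v ≠ c j := by
      rintro rfl
      simp at hn
    obtain ⟨u, hadj, hreach', hdist, hle⟩ := exists_adj_weightedDist_add_one (ρ := ρ) hreach hne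
    have hsecond' : ∀ l, l ≠ i → G.Reachable (c l) u →
        weightedDist G c ρ j u ≤ weightedDist G c ρ l u :=
      fun l hl hlu => hle l (hsecond l hl (hlu.trans hadj.symm.reachable))
    -- On a shortest path to `c j`, the first vertex outside the cell of `i` is in that of `j`.
    obtain h | h := le_total (weightedDist G c ρ i u) (weightedDist G c ρ j u)
    · refine ih ⟨hv.1.trans hadj.reachable, fun l hlu => ?_⟩ hreach' hsecond' (by omega)
      obtain rfl | hl := eq_or_ne l i
      exacts [le_rfl, h.trans (hsecond' l hl hlu)]
    · refine ⟨v, hv, u, ⟨hreach', fun l hlu => ?_⟩, hadj⟩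
      obtain rfl | hl := eq_or_ne l i
      exacts [h, hsecond' l hl hlu]

theorem mem_gBall_floor_iff {i : ι} (hρ : 0 ≤ ρ i) {u : V} :
    u ∈ G.gBall (c i) ⌊ρ i⌋₊ ↔ G.Reachable (c i) u ∧ weightedDist G c ρ i u ≤ 0 := by
  rw [weightedDist, sub_nonpos, ← Nat.le_floor_iff hρ]
  rfl

theorem center_mem_voronoiCell (hρ : ∀ i, 0 ≤ ρ i)
    (hanti : ∀ i j, G.gBall (c i) ⌊ρ i⌋₊ ⊆ G.gBall (c j) ⌊ρ j⌋₊ → i = j) (i : ι) :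
    c i ∈ voronoiCell G c ρ i := by
  refine ⟨.refl _, fun j hj => ?_⟩
  by_contra! h
  obtain rfl : i = j := by
    refine hanti i j fun u hu => ?_
    rw [mem_gBall_floor_iff (hρ _)] at hu ⊢
    have : (G.dist (c j) u : ℝ) ≤ G.dist (c j) (c i) + G.dist (c i) u := by
      exact_mod_cast hj.dist_triangle_left u
    simp only [weightedDist, SimpleGraph.dist_self, Nat.cast_zero] at h hu ⊢
    exact ⟨hj.trans hu.1, by linarith⟩
  exact h.false

/-- The graph on a family of sets in which two members are adjacent when some vertex lies in
both of them and in no other member. -/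
def exclusiveGraph (B : ι → Set V) : SimpleGraph ι where
  Adj i j := i ≠ j ∧ ∃ v ∈ B i ∩ B j, ∀ l, v ∈ B l → l = i ∨ l = j
  symm := ⟨fun _ _ ⟨hne, v, hv, h⟩ => ⟨hne.symm, v, hv.symm, fun l hl => (h l hl).symm⟩⟩
  loopless := ⟨fun _ h => h.1 rfl⟩

theorem exists_adj_voronoiCell_of_exclusiveGraph_adj (hρ : ∀ i, 0 ≤ ρ i)
    (hfract : Function.Injective fun i => Int.fract (ρ i))
    (hanti : ∀ i j, G.gBall (c i) ⌊ρ i⌋₊ ⊆ G.gBall (c j) ⌊ρ j⌋₊ → i = j) {i j : ι}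
    (hij : (exclusiveGraph fun i => G.gBall (c i) ⌊ρ i⌋₊).Adj i j) :
    ∃ x ∈ voronoiCell G c ρ i, ∃ y ∈ voronoiCell G c ρ j, G.Adj x y := by
  obtain ⟨hne, v, ⟨hvi, hvj⟩, hv⟩ := hij
  simp only [mem_gBall_floor_iff (hρ _)] at hvi hvj hv
  wlog h : weightedDist G c ρ i v ≤ weightedDist G c ρ j v generalizing i j
  · obtain ⟨x, hx, y, hy, hxy⟩ :=
      this hne.symm hvj hvi (fun l hl => (hv l hl).symm) (le_of_not_ge h)
    exact ⟨y, hy, x, hx, hxy.symm⟩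
  have hsecond : ∀ l, l ≠ i → G.Reachable (c l) v →
      weightedDist G c ρ j v ≤ weightedDist G c ρ l v := fun l hli hl => by
    obtain rfl | hlj := eq_or_ne l j
    · exact le_rfl
    · by_contra! hlt
      exact (hv l ⟨hl, hlt.le.trans hvj.2⟩).elim hli hlj
  refine exists_adj_voronoiCell hfract hne (center_mem_voronoiCell hρ hanti j)
    ⟨hvi.1, fun l hl => ?_⟩ hvj.1 hsecond
  obtain rfl | hli := eq_or_ne l i
  exacts [le_rfl, h.trans (hsecond l hli hl)]

theorem graphMinor_exclusiveGraph_of_injective_fract (hρ : ∀ i, 0 ≤ ρ i)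
    (hfract : Function.Injective fun i => Int.fract (ρ i))
    (hanti : ∀ i j, G.gBall (c i) ⌊ρ i⌋₊ ⊆ G.gBall (c j) ⌊ρ j⌋₊ → i = j) :
    GraphMinor (exclusiveGraph fun i => G.gBall (c i) ⌊ρ i⌋₊) G :=
  ⟨voronoiCell G c ρ, fun i => connected_induce_voronoiCell (center_mem_voronoiCell hρ hanti i),
    fun _ _ => disjoint_voronoiCell hfract,
    fun _ _ => exists_adj_voronoiCell_of_exclusiveGraph_adj hρ hfract hanti⟩

theorem exists_floor_eq_injective_fract [Countable ι] (r : ι → ℕ) :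
    ∃ ρ : ι → ℝ, (∀ i, 0 ≤ ρ i) ∧ (∀ i, ⌊ρ i⌋₊ = r i) ∧
      Function.Injective fun i => Int.fract (ρ i) := by
  obtain ⟨f, hf⟩ := exists_injective_nat ι
  have inv_lt_one : ∀ i, ((f i : ℝ) + 2)⁻¹ < 1 := fun i =>
    inv_lt_one_of_one_lt₀ (by linarith [(f i).cast_nonneg (α := ℝ)])
  refine ⟨fun i => r i + ((f i : ℝ) + 2)⁻¹, fun i => by positivity, fun i => ?_, fun i j hij => ?_⟩
  · simp only [add_comm (r i : ℝ)]
    rw [Nat.floor_add_natCast (by positivity), Nat.floor_eq_zero.2 (inv_lt_one i), zero_add]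
  · simp only [Int.fract_natCast_add, Int.fract_eq_self.2 ⟨by positivity, inv_lt_one _⟩] at hij
    exact hf (by simpa using hij)

theorem graphMinor_exclusiveGraph [Countable ι] {B : ι → Set V}
    (hball : ∀ i, ∃ v r, B i = G.gBall v r) (hanti : ∀ i j, B i ⊆ B j → i = j) :
    GraphMinor (exclusiveGraph B) G := by
  choose c r hB using hball
  obtain ⟨ρ, hρ, hfloor, hfract⟩ := exists_floor_eq_injective_fract r
  obtain rfl : B = fun i => G.gBall (c i) ⌊ρ i⌋₊ := funext fun i => by rw [hB, hfloor]
  exact graphMinor_exclusiveGraph_of_injective_fract hρ hfract hanti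

end Voronoi

section Sampling

variable {α : Type*} [Fintype α] {p w : α → ℝ}

open Classical in
/-- The probability that exactly the set `S` is drawn when each `i` is drawn independently with
probability `p i`. -/
noncomputable def samplingProb (p : α → ℝ) (S : Finset α) : ℝ :=
  (∏ i ∈ S, p i) * ∏ i ∈ Sᶜ, (1 - p i)

theorem samplingProb_nonneg (hp : ∀ i, p i ∈ Set.Icc 0 1) (S : Finset α) :
    0 ≤ samplingProb p S :=
  mul_nonneg (Finset.prod_nonneg fun i _ => (hp i).1)
    (Finset.prod_nonneg fun i _ => sub_nonneg.2 (hp i).2)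

open Classical in
theorem sum_samplingProb_inter_eq (p : α → ℝ) {A T : Finset α} (hAT : A ⊆ T) :
    ∑ S with T ∩ S = A, samplingProb p S = (∏ i ∈ A, p i) * ∏ i ∈ T \ A, (1 - p i) := by
  have inter_eq_iff : ∀ S : Finset α,
      T ∩ S = A ↔ (∀ i ∈ S, i ∈ T → i ∈ A) ∧ ∀ i ∈ Sᶜ, i ∉ A := fun S => by
    simp only [Finset.ext_iff, Finset.mem_inter, Finset.mem_compl]
    grind
  calc ∑ S with T ∩ S = A, samplingProb p S
      = ∑ S : Finset α, (∏ i ∈ S, if i ∈ T → i ∈ A then p i else 0) *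
          ∏ i ∈ Sᶜ, if i ∉ A then 1 - p i else 0 := by
        simp only [Finset.sum_filter, samplingProb, Finset.prod_ite_zero, ite_zero_mul_ite_zero,
          inter_eq_iff]
        congr!
    _ = ∏ i, ((if i ∈ T → i ∈ A then p i else 0) + if i ∉ A then 1 - p i else 0) :=
        (Fintype.prod_add _ _).symm
    _ = ∏ i, (if i ∈ A then p i else 1) * if i ∈ T \ A then 1 - p i else 1 := by
        refine Finset.prod_congr rfl fun i _ => ?_
        grind
    _ = _ := by
        rw [Finset.prod_mul_distrib, Fintype.prod_ite_mem, Fintype.prod_ite_mem]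

theorem sum_mul_card_eq_sum_sum {β : Type*} [Fintype β] [DecidableEq β] (f : α → ℝ)
    (X : α → Finset β) : ∑ a, f a * #(X a) = ∑ b, ∑ a with b ∈ X a, f a := by
  simp [Finset.sum_comm' (t' := Finset.univ) (s' := X), mul_comm]

theorem sum_samplingProb_mul_card (p : α → ℝ) : ∑ S, samplingProb p S * #S = ∑ i, p i := by
  classical
  rw [sum_mul_card_eq_sum_sum _ fun S => S]
  refine Finset.sum_congr rfl fun i _ => ?_
  simpa [Finset.singleton_inter] using sum_samplingProb_inter_eq p (Finset.Subset.refl {i})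

theorem mul_exp_neg_le_one_sub_exp_neg (x : ℝ) : x * Real.exp (-x) ≤ 1 - Real.exp (-x) := by
  have h := mul_le_mul_of_nonneg_right (Real.add_one_le_exp x) (Real.exp_pos (-x)).le
  rw [← Real.exp_add, add_neg_cancel, Real.exp_zero] at h
  linarith

open Classical in
theorem prod_mul_exp_neg_sum_le_sum_samplingProb (hw : ∀ i, 0 ≤ w i) {A T : Finset α}
    (hAT : A ⊆ T) : (∏ i ∈ A, w i) * Real.exp (-∑ i ∈ T, w i) ≤
      ∑ S with T ∩ S = A, samplingProb (fun i => 1 - Real.exp (-w i)) S := by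
  calc (∏ i ∈ A, w i) * Real.exp (-∑ i ∈ T, w i)
      = (∏ i ∈ A, w i * Real.exp (-w i)) * ∏ i ∈ T \ A, Real.exp (-w i) := by
        rw [← Finset.sum_neg_distrib, Real.exp_sum, ← Finset.prod_sdiff hAT,
          Finset.prod_mul_distrib]
        ring
    _ ≤ (∏ i ∈ A, (1 - Real.exp (-w i))) * ∏ i ∈ T \ A, Real.exp (-w i) := by
        gcongr with i
        · exact fun i _ => mul_nonneg (hw i) (Real.exp_pos _).le
        · exact mul_exp_neg_le_one_sub_exp_neg _
    _ = _ := by simp [sum_samplingProb_inter_eq _ hAT]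

end Sampling

section ExclusivePairs

variable {α V : Type*} {B : α → Set V} {w : α → ℝ}

/-- The intersection graph of a family of sets. -/
def intersectionGraph (B : α → Set V) : SimpleGraph α where
  Adj i j := i ≠ j ∧ ¬ Disjoint (B i) (B j)
  symm := ⟨fun _ _ h => ⟨h.1.symm, fun hd => h.2 hd.symm⟩⟩
  loopless := ⟨fun _ h => h.1 rfl⟩

/-- The exclusive graph of the members of `B` indexed by `S`, as a graph on the whole index
type. -/
def exclusiveGraphOn (B : α → Set V) (S : Finset α) : SimpleGraph α :=
  (exclusiveGraph fun i : S => B i).map (Function.Embedding.subtype (· ∈ S))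

theorem exclusiveGraphOn_adj {S : Finset α} {i j : α} (hij : i ≠ j) (hi : i ∈ S) (hj : j ∈ S)
    {v : V} (hv : v ∈ B i ∩ B j) (h : ∀ l ∈ S, v ∈ B l → l = i ∨ l = j) :
    (exclusiveGraphOn B S).Adj i j :=
  ⟨hij, ⟨i, hi⟩, ⟨j, hj⟩, ⟨fun h => hij (congrArg Subtype.val h), v, hv, fun l hl => by
    simpa only [Subtype.ext_iff] using h l l.2 hl⟩, rfl, rfl⟩

variable [Fintype α]

open Classical in
theorem card_exclusiveGraphOn_adj (B : α → Set V) (S : Finset α) :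
    #{q : α × α | (exclusiveGraphOn B S).Adj q.1 q.2} =
      2 * #(exclusiveGraph fun i : S => B i).edgeFinset := by
  rw [← SimpleGraph.card_edgeFinset_map (Function.Embedding.subtype (· ∈ S))]
  convert (exclusiveGraphOn B S).two_mul_card_edgeFinset.symm
  rfl

open Classical in
theorem mul_mul_exp_neg_one_le_sum_samplingProb (hw : ∀ i, 0 ≤ w i)
    (hcover : ∀ v, ∑ i with v ∈ B i, w i ≤ 1) {i j : α} (hij : (intersectionGraph B).Adj i j) :
    w i * w j * Real.exp (-1) ≤
      ∑ S with (exclusiveGraphOn B S).Adj i j,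
        samplingProb (fun i => 1 - Real.exp (-w i)) S := by
  obtain ⟨hne, hB⟩ := hij
  obtain ⟨v, hvi, hvj⟩ := Set.not_disjoint_iff.1 hB
  set T : Finset α := {l | v ∈ B l}
  have hT : {i, j} ⊆ T := by simp [T, Finset.insert_subset_iff, hvi, hvj]
  calc w i * w j * Real.exp (-1)
      ≤ (∏ l ∈ {i, j}, w l) * Real.exp (-∑ l ∈ T, w l) := by
        rw [Finset.prod_pair hne]
        have := mul_nonneg (hw i) (hw j)
        gcongr
        exact hcover v
    _ ≤ ∑ S with T ∩ S = {i, j}, samplingProb (fun i => 1 - Real.exp (-w i)) S :=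
        prod_mul_exp_neg_sum_le_sum_samplingProb hw hT
    _ ≤ _ := by
        refine Finset.sum_le_sum_of_subset_of_nonneg (fun S hS => ?_) fun S _ _ =>
          samplingProb_nonneg (fun l => ⟨by simp [hw l], by simp [Real.exp_nonneg]⟩) S
        simp only [Finset.mem_filter_univ, Finset.ext_iff, Finset.mem_inter, Finset.mem_insert,
          Finset.mem_singleton, T] at hS ⊢
        exact exclusiveGraphOn_adj hne ((hS i).2 (.inl rfl)).2 ((hS j).2 (.inr rfl)).2
          ⟨hvi, hvj⟩ fun l hl hvl => (hS l).1 ⟨hvl, hl⟩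

open Classical in
theorem sum_intersectionGraph_mul_le {k : ℝ} (hw : ∀ i, 0 ≤ w i)
    (hcover : ∀ v, ∑ i with v ∈ B i, w i ≤ 1)
    (hsparse : ∀ S : Finset α, (#(exclusiveGraph fun i : S => B i).edgeFinset : ℝ) ≤ k * #S) :
    ∑ i, ∑ j with (intersectionGraph B).Adj i j, w i * w j ≤
      2 * k * Real.exp 1 * ∑ i, (1 - Real.exp (-w i)) := by
  set μ := samplingProb fun i => 1 - Real.exp (-w i)
  have μ_nonneg : ∀ S, 0 ≤ μ S :=
    samplingProb_nonneg fun i => ⟨by simp [hw i], by simp [Real.exp_nonneg]⟩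
  let X (S : Finset α) : Finset (α × α) :=
    {q | (exclusiveGraphOn B S).Adj q.1 q.2}
  have card_X_le : ∀ S, (#(X S) : ℝ) ≤ 2 * k * #S := fun S => by
    rw [card_exclusiveGraphOn_adj]
    push_cast
    linarith [hsparse S]
  have mul_exp_le : (∑ i, ∑ j with (intersectionGraph B).Adj i j, w i * w j) * Real.exp (-1) ≤
      2 * k * ∑ i, (1 - Real.exp (-w i)) :=
    calc (∑ i, ∑ j with (intersectionGraph B).Adj i j, w i * w j) * Real.exp (-1)
        ≤ ∑ i, ∑ j, ∑ S with (i, j) ∈ X S, μ S := by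
          simp_rw [Finset.sum_mul]
          refine Finset.sum_le_sum fun i _ => ?_
          refine (Finset.sum_le_sum fun j hj => ?_).trans
            (Finset.sum_le_univ_sum_of_nonneg fun j => Finset.sum_nonneg fun S _ => μ_nonneg S)
          simpa [X] using
            mul_mul_exp_neg_one_le_sum_samplingProb hw hcover (Finset.mem_filter.1 hj).2
      _ = ∑ S, μ S * #(X S) := by rw [sum_mul_card_eq_sum_sum, Fintype.sum_prod_type]
      _ ≤ ∑ S, μ S * (2 * k * #S) := by
          gcongr with S
          exacts [μ_nonneg S, card_X_le S]
      _ = 2 * k * ∑ i, (1 - Real.exp (-w i)) := by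
          rw [← sum_samplingProb_mul_card fun i => 1 - Real.exp (-w i), Finset.mul_sum]
          exact Finset.sum_congr rfl fun S _ => by ring
  rw [Real.exp_neg, ← div_eq_mul_inv, div_le_iff₀ (Real.exp_pos 1)] at mul_exp_le
  linarith

end ExclusivePairs

section WeightedTuran

variable {α : Type*} {H : SimpleGraph α} {w : α → ℝ}

open Classical in
/-- The sum of `w i * w j` over the ordered pairs in `A` whose members are equal or adjacent. -/
noncomputable def closedPairWeight (H : SimpleGraph α) (w : α → ℝ) (A : Finset α) : ℝ :=
  ∑ i ∈ A, ∑ j ∈ A with i = j ∨ H.Adj i j, w i * w j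

open Classical in
theorem closedPairWeight_eq (H : SimpleGraph α) (w : α → ℝ) (A : Finset α) :
    closedPairWeight H w A = ∑ i ∈ A, w i ^ 2 + ∑ i ∈ A, ∑ j ∈ A with H.Adj i j, w i * w j := by
  rw [closedPairWeight, ← Finset.sum_add_distrib]
  refine Finset.sum_congr rfl fun i hi => ?_
  rw [Finset.filter_or, Finset.sum_union, Finset.filter_eq, if_pos hi, Finset.sum_singleton, sq]
  refine Finset.disjoint_filter.2 fun j _ hij hadj => ?_
  exact hadj.ne hij

theorem add_sq_le_of_sq_le_mul {m d W Q : ℝ} (hm : 0 ≤ m) (hQ : 0 ≤ Q) (h : W ^ 2 ≤ m * Q) :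
    (d + W) ^ 2 ≤ (m + 1) * (d ^ 2 + Q) := by
  have two_mul_le : 2 * d * W ≤ Q + m * d ^ 2 := by
    obtain rfl | hm := hm.eq_or_lt
    · have : W = 0 := by nlinarith
      simpa [this] using hQ
    · refine le_of_mul_le_mul_left ?_ hm
      nlinarith [sq_nonneg (m * d - W)]
  linarith

open Classical in
theorem exists_sq_sum_add_closedPairWeight_le (hw : ∀ i, 0 ≤ w i) {A : Finset α}
    (hA : A.Nonempty) : ∃ e ∈ A, (∑ j ∈ A with e = j ∨ H.Adj e j, w j) ^ 2 +
      closedPairWeight H w {j ∈ A | ¬ (e = j ∨ H.Adj e j)} ≤ closedPairWeight H w A := by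
  obtain ⟨e, he, hmin⟩ := A.exists_min_image (fun i => ∑ j ∈ A with i = j ∨ H.Adj i j, w j) hA
  refine ⟨e, he, ?_⟩
  unfold closedPairWeight
  rw [← Finset.sum_filter_add_sum_filter_not A (fun j => e = j ∨ H.Adj e j), sq, Finset.sum_mul]
  refine add_le_add (Finset.sum_le_sum fun i hi => ?_) (Finset.sum_le_sum fun i _ => ?_)
  · rw [← Finset.mul_sum]
    exact mul_le_mul_of_nonneg_left (hmin i (Finset.mem_filter.1 hi).1) (hw i)
  · exact Finset.sum_le_sum_of_subset_of_nonneg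
      (Finset.filter_subset_filter _ (Finset.filter_subset _ _))
      fun j _ _ => mul_nonneg (hw i) (hw j)

theorem closedPairWeight_nonneg (hw : ∀ i, 0 ≤ w i) (A : Finset α) :
    0 ≤ closedPairWeight H w A :=
  Finset.sum_nonneg fun i _ => Finset.sum_nonneg fun j _ => mul_nonneg (hw i) (hw j)

theorem exists_isIndepSet_sq_sum_le (H : SimpleGraph α) (hw : ∀ i, 0 ≤ w i) (A : Finset α) :
    ∃ M ⊆ A, H.IsIndepSet M ∧ (∑ i ∈ A, w i) ^ 2 ≤ #M * closedPairWeight H w A := by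
  classical
  induction A using Finset.strongInduction with
  | H A ih =>
    obtain rfl | hA := A.eq_empty_or_nonempty
    · exact ⟨∅, by simp [SimpleGraph.IsIndepSet]⟩
    obtain ⟨e, heA, hle⟩ := exists_sq_sum_add_closedPairWeight_le (H := H) hw hA
    set A' := {j ∈ A | ¬ (e = j ∨ H.Adj e j)}
    have heA' : e ∉ A' := by simp [A']
    have hA' : A' ⊆ A := Finset.filter_subset _ _
    obtain ⟨M, hMA', hM, hsq⟩ := ih A' (hA'.ssubset_of_mem_notMem heA heA')
    refine ⟨insert e M, Finset.insert_subset heA (hMA'.trans hA'), ?_, ?_⟩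
    · rw [SimpleGraph.IsIndepSet, Finset.coe_insert]
      have not_adj : ∀ j ∈ M, ¬ H.Adj e j := fun j hj hadj =>
        (Finset.mem_filter.1 (hMA' hj)).2 (.inr hadj)
      exact hM.insert fun j hj _ => ⟨not_adj j hj, fun h => not_adj j hj h.symm⟩
    · rw [Finset.card_insert_of_notMem fun h => heA' (hMA' h),
        ← Finset.sum_filter_add_sum_filter_not A (fun j => e = j ∨ H.Adj e j)]
      push_cast
      exact (add_sq_le_of_sq_le_mul (Nat.cast_nonneg _) (closedPairWeight_nonneg hw _) hsq).trans
        (mul_le_mul_of_nonneg_left hle (by positivity))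

end WeightedTuran

section FractionalMatching

theorem sq_add_mul_one_sub_exp_neg_le {C x : ℝ} (hC : 4 ≤ C) (hx : x ≤ 2) :
    x ^ 2 + C * (1 - Real.exp (-x)) ≤ C * x := by
  have h : (1 - x / 2) ^ 2 ≤ Real.exp (-x) := by
    exact_mod_cast Real.one_sub_div_pow_le_exp_neg (n := 2) (by exact_mod_cast hx)
  nlinarith [mul_le_mul_of_nonneg_left h (by linarith : 0 ≤ C),
    mul_le_mul_of_nonneg_right hC (sq_nonneg x)]

open Classical in
theorem exists_pairwiseDisjoint_sum_le {α V : Type*} [Fintype α] {B : α → Set V} {w : α → ℝ}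
    {k : ℝ} (hk : 1 ≤ k) (hB : ∀ i, (B i).Nonempty) (hw : ∀ i, 0 ≤ w i)
    (hcover : ∀ v, ∑ i with v ∈ B i, w i ≤ 1)
    (hsparse : ∀ S : Finset α, (#(exclusiveGraph fun i : S => B i).edgeFinset : ℝ) ≤ k * #S) :
    ∃ M : Finset α, (M : Set α).PairwiseDisjoint B ∧ ∑ i, w i ≤ 2 * k * Real.exp 1 * #M := by
  set C := 2 * k * Real.exp 1
  have hC : 4 ≤ C := by nlinarith [Real.add_one_le_exp 1]
  have w_le_two : ∀ i, w i ≤ 2 := fun i => by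
    obtain ⟨v, hv⟩ := hB i
    have : w i ≤ ∑ j with v ∈ B j, w j :=
      Finset.single_le_sum (fun j _ => hw j) (Finset.mem_filter.2 ⟨Finset.mem_univ i, hv⟩)
    linarith [hcover v]
  have pairWeight_le : closedPairWeight (intersectionGraph B) w Finset.univ ≤ C * ∑ i, w i :=
    calc closedPairWeight (intersectionGraph B) w Finset.univ
        ≤ ∑ i, w i ^ 2 + C * ∑ i, (1 - Real.exp (-w i)) := by
          rw [closedPairWeight_eq]
          exact add_le_add_right (sum_intersectionGraph_mul_le hw hcover hsparse) _
      _ ≤ C * ∑ i, w i := by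
          rw [Finset.mul_sum, Finset.mul_sum, ← Finset.sum_add_distrib]
          exact Finset.sum_le_sum fun i _ => sq_add_mul_one_sub_exp_neg_le hC (w_le_two i)
  obtain ⟨M, -, hM, hsq⟩ := exists_isIndepSet_sq_sum_le (intersectionGraph B) hw Finset.univ
  refine ⟨M, fun i hi j hj hij => ?_, ?_⟩
  · by_contra h
    exact hM hi hj hij ⟨hij, h⟩
  · have h := hsq.trans (mul_le_mul_of_nonneg_left pairWeight_le (Nat.cast_nonneg _))
    obtain h0 | hpos := (Finset.sum_nonneg fun i _ => hw i).eq_or_lt'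
    · rw [h0]
      positivity
    · refine le_of_mul_le_mul_right ?_ hpos
      linarith

variable {V : Type*} [Fintype V] {E : Set (Set V)}

theorem card_le_matchingNumber {α : Type*} {B : α → Set V} {M : Finset α}
    (hB : Function.Injective B) (hBE : ∀ i, B i ∈ E) (hM : (M : Set α).PairwiseDisjoint B) :
    #M ≤ matchingNumber E := by
  classical
  refine le_csSup ⟨Fintype.card (Set V), ?_⟩ ⟨M.map ⟨B, hB⟩, ?_, ?_, M.card_map _⟩
  · rintro n ⟨M, -, -, rfl⟩
    exact M.card_le_univ
  · rw [Finset.coe_map]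
    exact Set.image_subset_iff.2 fun i _ => hBE i
  · rw [Finset.coe_map]
    exact (Set.InjOn.pairwise_image hB.injOn).2 hM

open Classical in
theorem IsFractionalMatching.exists_minimal {w : Set V → ℝ} (hw : IsFractionalMatching E w) :
    ∃ w' : {e // Minimal (· ∈ E) e} → ℝ, (∀ e, 0 ≤ w' e) ∧
      (∀ v, ∑ e with v ∈ e.1, w' e ≤ 1) ∧ ∑ e, w' e = ∑ e, w e := by
  obtain ⟨hw0, hwE, hwv⟩ := hw
  have sum_coe : ∀ f : Set V → ℝ, (∀ e ∉ E, f e = 0) → ∑ e : E, f e = ∑ e, f e := fun f hf =>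
    Fintype.sum_of_injective _ Subtype.val_injective _ _ (by simpa using hf) fun _ => rfl
  have exists_le_minimal : ∀ e : E, ∃ m : {e // Minimal (· ∈ E) e}, m.1 ⊆ e := fun e => by
    obtain ⟨m, hme, hm⟩ := E.toFinite.isPWO.exists_le_minimal e.2
    exact ⟨⟨m, hm⟩, hme⟩
  choose m hm using exists_le_minimal
  refine ⟨fun f => ∑ e with m e = f, w e, fun f => Finset.sum_nonneg fun e _ => hw0 e,
    fun v => ?_, by rw [Finset.sum_fiberwise, sum_coe w hwE]⟩
  calc ∑ f : {e // Minimal (· ∈ E) e} with v ∈ f.1, ∑ e with m e = f, w e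
      = ∑ e : E, if v ∈ (m e).1 then w e else 0 := by
        rw [Finset.sum_fiberwise_eq_sum_filter, Finset.sum_filter]
        simp only [Finset.mem_filter_univ]
    _ ≤ ∑ e : E, Set.indicator {e : Set V | v ∈ e} w e := by
        refine Finset.sum_le_sum fun e _ => ?_
        split_ifs with hv
        · exact (Set.indicator_of_mem (s := {e : Set V | v ∈ e}) (hm e hv) w).ge
        · exact Set.indicator_nonneg (fun e _ => hw0 e) _
    _ = ∑ e : Set V, Set.indicator {e : Set V | v ∈ e} w e :=
        sum_coe _ fun e he => by simp [hwE e he]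
    _ ≤ 1 := hwv v

end FractionalMatching

open Classical in
theorem card_edgeFinset_exclusiveGraph_le {V ι : Type*} [Fintype ι] {G : SimpleGraph V}
    {B : ι → Set V} (hG : ¬ GraphMinor (⊤ : SimpleGraph (Fin 5)) G)
    (hball : ∀ i, ∃ v r, B i = G.gBall v r) (hanti : ∀ i j, B i ⊆ B j → i = j) :
    #(exclusiveGraph B).edgeFinset ≤ 3 * Fintype.card ι :=
  card_edgeFinset_le_of_not_graphMinor_top_five fun h =>
    hG (h.trans (graphMinor_exclusiveGraph hball hanti))

theorem nuStar_le_six_e_mul_nu_planar_general {V : Type*} [Fintype V] (G : SimpleGraph V)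
    (hG : ¬ GraphMinor (⊤ : SimpleGraph (Fin 5)) G) (E : Set (Set V)) (hE : IsBallHypergraph G E)
    (w : Set V → ℝ) (hw : IsFractionalMatching E w) :
    ∑ e : Set V, w e ≤ 6 * Real.exp 1 * (matchingNumber E : ℝ) := by
  classical
  obtain ⟨w', hw'0, hcover, hsum⟩ := hw.exists_minimal
  have hball : ∀ e : {e // Minimal (· ∈ E) e}, ∃ v r, e.1 = G.gBall v r := fun e =>
    hE _ e.2.prop
  have hanti : ∀ e f : {e // Minimal (· ∈ E) e}, e.1 ⊆ f.1 → e = f := fun e f hef =>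
    Subtype.ext (f.2.eq_of_subset e.2.prop hef)
  have hB : ∀ e : {e // Minimal (· ∈ E) e}, e.1.Nonempty := fun e => by
    obtain ⟨v, r, he⟩ := hball e
    exact he ▸ ⟨v, .refl _, by simp⟩
  have hsparse : ∀ S : Finset {e // Minimal (· ∈ E) e},
      (#(exclusiveGraph fun e : S => e.1.1).edgeFinset : ℝ) ≤ 3 * #S := fun S => by
    exact_mod_cast Fintype.card_coe S ▸ card_edgeFinset_exclusiveGraph_le hG
      (fun e : S => hball e) fun e f hef => Subtype.ext (hanti e f hef)
  obtain ⟨M, hM, hle⟩ := exists_pairwiseDisjoint_sum_le (by norm_num) hB hw'0 hcover hsparse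
  calc ∑ e, w e = ∑ e, w' e := hsum.symm
    _ ≤ 2 * 3 * Real.exp 1 * #M := hle
    _ ≤ 2 * 3 * Real.exp 1 * matchingNumber E := by
      gcongr
      exact card_le_matchingNumber Subtype.val_injective (fun e => e.2.prop) hM
    _ = 6 * Real.exp 1 * matchingNumber E := by norm_num

/-- For every planar graph `G` and every ball hypergraph `𝓗` of `G`, the fractional
matching number satisfies `ν*(𝓗) ≤ 6e·ν(𝓗)`: every fractional matching has total
weight at most `6e·ν(𝓗)`. -/
theorem nuStar_le_six_e_mul_nu_planar {V : Type} [Fintype V] (G : SimpleGraph V)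
    (hG : IsPlanar G) (E : Set (Set V)) (hE : IsBallHypergraph G E)
    (w : Set V → ℝ) (hw : IsFractionalMatching E w) :
    ∑ e : Set V, w e ≤ 6 * Real.exp 1 * (matchingNumber E : ℝ) :=
  nuStar_le_six_e_mul_nu_planar_general G hG.1 E hE w hw
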